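/- Let B be a binary doubly even [36,6,16] code such that the dual code B⊥ has minimum Hamming weight 3. Then B⊥ has exactly 120 codewords of weight 3 and exactly 945 codewords of weight 4. -/

import Mathlib

noncomputable section

/-- The dual code `B⊥ = {x ∈ F₂ⁿ : x·y = 0 for all y ∈ B}`. -/
def dualCode {n : ℕ} (B : Submodule (ZMod 2) (Fin n → ZMod 2)) : Set (Fin n → ZMod 2) :=
  {x | ∀ y ∈ B, ∑ i, x i * y i = 0}

/-- A binary code is doubly even if every codeword has Hamming weight divisible by 4. -/
def IsDoublyEven {n : ℕ} (B : Submodule (ZMod 2) (Fin n → ZMod 2)) : Prop :=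
  ∀ c ∈ B, 4 ∣ hammingNorm c

/-- A set of binary words has minimum weight `d`:
`d` is the least Hamming weight among its nonzero elements. -/
def HasMinWeight {n : ℕ} (S : Set (Fin n → ZMod 2)) (d : ℕ) : Prop :=
  IsLeast {w : ℕ | ∃ c ∈ S, c ≠ 0 ∧ hammingNorm c = w} d

/-- The number of words of Hamming weight `w` in `S`. -/
def weightCount {n : ℕ} (S : Set (Fin n → ZMod 2)) (w : ℕ) : ℕ :=
  Set.ncard {c ∈ S | hammingNorm c = w}

/-- The sign character of `ZMod 2`. -/
def chi (z : ZMod 2) : ℤ := if z = 0 then 1 else -1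

theorem chi_add (a b : ZMod 2) : chi (a + b) = chi a * chi b := by
  revert a b; decide

theorem chi_sum {ι : Type*} (s : Finset ι) (f : ι → ZMod 2) :
    chi (∑ i ∈ s, f i) = ∏ i ∈ s, chi (f i) := by
  classical
  induction s using Finset.induction_on with
  | empty => simp [chi]
  | insert a s ha ih => rw [Finset.sum_insert ha, Finset.prod_insert ha, chi_add, ih]

/-- The character sum of a word. -/
def charSum {n : ℕ} (c : Fin n → ZMod 2) : ℤ := ∑ i, chi (c i)

theorem charSum_eq {n : ℕ} (c : Fin n → ZMod 2) :
    charSum c = n - 2 * (hammingNorm c : ℤ) := by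
  unfold charSum hammingNorm
  have h : ∀ i, chi (c i) = 1 - 2 * (if c i ≠ 0 then 1 else 0 : ℤ) := by
    intro i; unfold chi; split_ifs <;> simp_all
  simp_rw [h]
  rw [Finset.sum_sub_distrib, ← Finset.mul_sum, Finset.sum_boole]
  simp

/-- The sum of unit vectors along a tuple. -/
def tupWord {n m : ℕ} (t : Fin m → Fin n) : Fin n → ZMod 2 :=
  ∑ j, Pi.single (t j) 1

theorem tupWord_apply {n m : ℕ} (t : Fin m → Fin n) (i : Fin n) :
    tupWord t i = ∑ j, if t j = i then 1 else 0 := by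
  unfold tupWord
  rw [Finset.sum_apply]
  refine Finset.sum_congr rfl fun j _ => ?_
  rw [Pi.single_apply]
  simp [eq_comm]

theorem tupWord_dot {n m : ℕ} (t : Fin m → Fin n) (c : Fin n → ZMod 2) :
    ∑ i, tupWord t i * c i = ∑ j, c (t j) := by
  simp_rw [tupWord_apply, Finset.sum_mul]
  rw [Finset.sum_comm]
  simp

theorem orthog {n : ℕ} (B : Submodule (ZMod 2) (Fin n → ZMod 2)) [Fintype B]
    (x : Fin n → ZMod 2) [Decidable (x ∈ dualCode B)] :
    ∑ c : B, chi (∑ i, x i * c.1 i) = if x ∈ dualCode B then (Fintype.card B : ℤ) else 0 := by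
  split_ifs with h
  · have : ∀ c : B, chi (∑ i, x i * c.1 i) = 1 := fun c => by rw [h c.1 c.2]; rfl
    simp [this]
  · simp only [dualCode, Set.mem_ofPred_eq, not_forall] at h
    obtain ⟨y, hy, hne⟩ := h
    have hm : chi (∑ i, x i * y i) = -1 := by simp [chi, hne]
    have e : ∑ c : B, chi (∑ i, x i * c.1 i)
        = ∑ c : B, chi (∑ i, x i * (c + ⟨y, hy⟩ : B).1 i) :=
      (Equiv.sum_comp (Equiv.addRight (⟨y, hy⟩ : B))
        (fun c : B => chi (∑ i, x i * c.1 i))).symm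
    have e2 : ∀ c : B, chi (∑ i, x i * (c + ⟨y, hy⟩ : B).1 i)
        = - chi (∑ i, x i * c.1 i) := by
      intro c
      simp only [Submodule.coe_add, Pi.add_apply, mul_add, Finset.sum_add_distrib]
      rw [chi_add, hm]; ring
    simp_rw [e2] at e
    rw [Finset.sum_neg_distrib] at e
    omega

open Classical in
theorem moment {n : ℕ} (B : Submodule (ZMod 2) (Fin n → ZMod 2)) [Fintype B] (m : ℕ) :
    ∑ c : B, charSum c.1 ^ m
      = Fintype.card B * ((Finset.univ.filter
          (fun t : Fin m → Fin n => tupWord t ∈ dualCode B)).card : ℤ) := by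
  have h : ∀ c : B, charSum c.1 ^ m
      = ∑ t : Fin m → Fin n, chi (∑ i, tupWord t i * c.1 i) := by
    intro c
    unfold charSum
    rw [Fintype.sum_pow]
    refine Finset.sum_congr rfl fun t _ => ?_
    rw [tupWord_dot, chi_sum]
  simp_rw [h]
  rw [Finset.sum_comm]
  simp_rw [orthog]
  rw [← Finset.sum_filter]
  simp [mul_comm]

theorem tupWord_supp {n m : ℕ} (t : Fin m → Fin n) (i : Fin n) (h : tupWord t i ≠ 0) :
    ∃ j, t j = i := by
  by_contra hc
  push Not at hc
  apply h
  rw [tupWord_apply]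
  simp [hc]

theorem tupWord_norm_le {n m : ℕ} (t : Fin m → Fin n) : hammingNorm (tupWord t) ≤ m := by
  unfold hammingNorm
  calc _ ≤ (Finset.univ.image t).card := by
        refine Finset.card_le_card fun i hi => ?_
        obtain ⟨j, hj⟩ := tupWord_supp t i (by simpa using hi)
        simp only [Finset.mem_image, Finset.mem_univ, true_and]
        exact ⟨j, hj⟩
    _ ≤ _ := by simpa using Finset.card_image_le (s := Finset.univ) (f := t)

theorem norm_parity {n : ℕ} (x : Fin n → ZMod 2) : ((hammingNorm x : ℕ) : ZMod 2) = ∑ i, x i := by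
  unfold hammingNorm
  rw [Finset.card_eq_sum_ones, Finset.sum_filter, Nat.cast_sum]
  refine Finset.sum_congr rfl fun i _ => ?_
  have h1 : ∀ z : ZMod 2, z ≠ 0 → z = 1 := by decide
  by_cases h : x i = 0
  · simp [h]
  · simp [h1 _ h]

theorem tupWord_parity {n m : ℕ} (t : Fin m → Fin n) : hammingNorm (tupWord t) % 2 = m % 2 := by
  have h := tupWord_dot t (fun _ => 1)
  simp only [mul_one] at h
  rw [← norm_parity] at h
  simp only [Finset.sum_const, Finset.card_univ, Fintype.card_fin, nsmul_eq_mul, mul_one] at h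
  exact (ZMod.natCast_eq_natCast_iff' _ _ _).1 h

theorem tupWord_inj {n m : ℕ} (t : Fin m → Fin n) (h : Function.Injective t) (j : Fin m) :
    tupWord t (t j) = 1 := by
  rw [tupWord_apply]
  simp [h.eq_iff]

theorem fiber_card {n m : ℕ} (x : Fin n → ZMod 2) (hx : hammingNorm x = m) :
    (Finset.univ.filter (fun t : Fin m → Fin n => tupWord t = x)).card = m.factorial := by
  classical
  have hc : Fintype.card {i // x i ≠ 0} = m := by
    rw [Fintype.card_subtype]; exact hx
  have e0 : Fin m ≃ {i // x i ≠ 0} := (Fintype.equivFinOfCardEq hc).symm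
  have hf : Fintype.card (Fin m ≃ {i // x i ≠ 0}) = m.factorial := by
    rw [Fintype.card_equiv e0, Fintype.card_fin]
  rw [← hf, ← Finset.card_univ]
  symm
  refine Finset.card_bij (fun e _ j => (e j).1) ?_ ?_ ?_
  · intro e _
    simp only [Finset.mem_filter, Finset.mem_univ, true_and]
    have hinj : Function.Injective (fun j => (e j).1) :=
      Subtype.val_injective.comp e.injective
    funext i
    by_cases hi : x i = 0
    · rw [hi]
      by_contra hne
      obtain ⟨j, hj⟩ := tupWord_supp _ i hne
      exact (e j).2 (by rw [hj]; exact hi)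
    · have h1 := tupWord_inj _ hinj (e.symm ⟨i, hi⟩)
      simp only [Equiv.apply_symm_apply] at h1
      rw [h1]
      generalize x i = z at hi
      revert z; decide
  · intro e _ e' _ h
    ext j
    exact congrArg Fin.val (congrFun h j)
  · intro t ht
    simp only [Finset.mem_filter, Finset.mem_univ, true_and] at ht
    have hsurj : ∀ i, x i ≠ 0 → ∃ j, t j = i := fun i hi => tupWord_supp t i (by rwa [ht])
    have hsub : Finset.univ.filter (fun i => x i ≠ 0) ⊆ Finset.univ.image t := by
      intro i hi
      obtain ⟨j, hj⟩ := hsurj i (by simpa using hi)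
      simp only [Finset.mem_image, Finset.mem_univ, true_and]
      exact ⟨j, hj⟩
    have hle : (Finset.univ.image t).card ≤ m := by
      simpa using Finset.card_image_le (s := Finset.univ) (f := t)
    have hcard : (Finset.univ.filter (fun i => x i ≠ 0)).card = m := hx
    have heq := Finset.eq_of_subset_of_card_le hsub (by rw [hcard]; exact hle)
    have hinj : Function.Injective t := by
      have : (Finset.univ.image t).card = (Finset.univ : Finset (Fin m)).card := by
        rw [← heq, hcard]; simp
      have := Finset.card_image_iff.1 this
      simpa using this
    have hmem : ∀ j, x (t j) ≠ 0 := by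
      intro j
      rw [← ht, tupWord_inj t hinj]; decide
    refine ⟨Equiv.ofBijective (fun j => (⟨t j, hmem j⟩ : {i // x i ≠ 0})) ⟨?_, ?_⟩,
      Finset.mem_univ _, ?_⟩
    · intro a b hab
      exact hinj (congrArg Subtype.val hab)
    · rintro ⟨i, hi⟩
      obtain ⟨j, hj⟩ := hsurj i hi
      exact ⟨j, Subtype.ext hj⟩
    · rfl

/-- Number of tuples with zero word. -/
def zeroCount (n m : ℕ) : ℕ :=
  (Finset.univ.filter (fun t : Fin m → Fin n => tupWord t = 0)).card

open Classical in
theorem tuple_count_big {n m : ℕ} (hm : 0 < m) (D : Set (Fin n → ZMod 2)) (h0 : 0 ∈ D)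
    (hD : ∀ x ∈ D, x ≠ 0 → hammingNorm x ≤ m → hammingNorm x % 2 = m % 2 → hammingNorm x = m) :
    (Finset.univ.filter (fun t : Fin m → Fin n => tupWord t ∈ D)).card
      = zeroCount n m + m.factorial * weightCount D m := by
  have hw : weightCount D m
      = (Finset.univ.filter (fun x : Fin n → ZMod 2 => x ∈ D ∧ hammingNorm x = m)).card := by
    unfold weightCount
    rw [← Set.ncard_coe_finset]
    congr 1
    ext x; simp
  have hz : ∀ x : Fin n → ZMod 2, hammingNorm x = m → x ≠ 0 := by
    rintro x hx rfl
    simp at hx; omega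
  have hsplit : Finset.univ.filter (fun t : Fin m → Fin n => tupWord t ∈ D)
      = Finset.univ.filter (fun t : Fin m → Fin n => tupWord t = 0) ∪
        Finset.univ.filter (fun t : Fin m → Fin n =>
          tupWord t ∈ D ∧ hammingNorm (tupWord t) = m) := by
    ext t
    simp only [Finset.mem_filter, Finset.mem_univ, true_and, Finset.mem_union]
    constructor
    · intro h
      by_cases ht : tupWord t = 0
      · exact Or.inl ht
      · exact Or.inr ⟨h, hD _ h ht (tupWord_norm_le t) (tupWord_parity t)⟩
    · rintro (h | h)
      · rw [h]; exact h0
      · exact h.1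
  rw [hsplit, Finset.card_union_of_disjoint, hw]
  · congr 1
    rw [Finset.card_eq_sum_card_fiberwise (f := tupWord)
      (t := Finset.univ.filter (fun x : Fin n → ZMod 2 => x ∈ D ∧ hammingNorm x = m))]
    · rw [Finset.sum_congr rfl (g := fun _ => m.factorial), Finset.sum_const, smul_eq_mul, mul_comm]
      intro x hx
      simp only [Finset.mem_filter, Finset.mem_univ, true_and] at hx
      rw [← fiber_card x hx.2]
      congr 1
      ext t
      simp only [Finset.mem_filter, Finset.mem_univ, true_and]
      constructor
      · exact fun h => h.2
      · rintro rfl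
        exact ⟨hx, rfl⟩
    · intro t ht
      simpa using ht
  · rw [Finset.disjoint_filter]
    intro t _ h h'
    exact hz _ h'.2 h

theorem zeroCount_odd (n m : ℕ) (h : m % 2 = 1) : zeroCount n m = 0 := by
  unfold zeroCount
  rw [Finset.card_eq_zero, Finset.filter_eq_empty_iff]
  intro t _ ht
  have := tupWord_parity t
  rw [ht] at this
  simp at this; omega

theorem sum_cons {α : Type*} [Fintype α] {m : ℕ} (F : (Fin (m + 1) → α) → ℕ) :
    ∑ t, F t = ∑ i : α, ∑ t : Fin m → α, F (Fin.cons i t) := by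
  rw [← (Fin.consEquiv (fun _ => α)).sum_comp, Fintype.sum_prod_type]
  rfl

theorem tup_two {n : ℕ} (i j : Fin n) : tupWord ![i, j] = 0 ↔ i = j := by
  constructor
  · intro h
    by_contra hij
    have := congrFun h i
    rw [tupWord_apply] at this
    rw [Fin.sum_univ_two] at this
    simp [Ne.symm hij] at this
  · rintro rfl
    funext k
    rw [tupWord_apply]
    simp only [Fin.sum_univ_two]
    exact CharTwo.add_self_eq_zero _

theorem tup_four {n : ℕ} (i j k l : Fin n) : tupWord ![i, j, k, l] = 0 ↔
    (i = j ∧ k = l) ∨ (i = k ∧ j = l) ∨ (i = l ∧ j = k) := by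
  have key : ∀ a, tupWord ![i, j, k, l] a = (if i = a then 1 else 0) + (if j = a then 1 else 0)
      + (if k = a then 1 else 0) + (if l = a then 1 else 0) := by
    intro a
    rw [tupWord_apply]
    rw [Fin.sum_univ_four]
    rfl
  have d11 : (1 : ZMod 2) + 1 = 0 := by decide
  constructor
  · intro h
    have hi := congrFun h i
    have hj := congrFun h j
    have hk := congrFun h k
    have hl := congrFun h l
    rw [key] at hi hj hk hl
    by_cases hij : i = j
    · subst hij
      refine Or.inl ⟨rfl, ?_⟩
      by_contra hkl
      by_cases hik : i = k <;> simp [hik, Ne.symm hkl, d11] at hk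
    · by_cases hik : i = k
      · subst hik
        refine Or.inr (Or.inl ⟨rfl, ?_⟩)
        by_contra hjl
        simp [hij, Ne.symm hjl] at hj
      · by_cases hil : i = l
        · subst hil
          refine Or.inr (Or.inr ⟨rfl, ?_⟩)
          by_contra hjk
          simp [hij, Ne.symm hjk] at hj
        · simp [Ne.symm hij, Ne.symm hik, Ne.symm hil] at hi
  · intro h
    funext a
    rw [key]
    rcases h with ⟨rfl, rfl⟩ | ⟨rfl, rfl⟩ | ⟨rfl, rfl⟩ <;> (rw [Pi.zero_apply]; split_ifs <;> decide)

theorem zeroCount_two (n : ℕ) : zeroCount n 2 = n := by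
  unfold zeroCount
  rw [Finset.card_filter, sum_cons]
  simp_rw [sum_cons]
  have : ∀ (i j : Fin n) (t : Fin 0 → Fin n), (Fin.cons i (Fin.cons j t) : Fin 2 → Fin n)
      = ![i, j] := by
    intro i j t
    ext a; fin_cases a <;> rfl
  simp [this, tup_two]

theorem zeroCount_four (n : ℕ) : zeroCount n 4 + 2 * n = 3 * n ^ 2 := by
  unfold zeroCount
  rw [Finset.card_filter, sum_cons]
  simp_rw [sum_cons]
  have : ∀ (i j k l : Fin n) (t : Fin 0 → Fin n),
      (Fin.cons i (Fin.cons j (Fin.cons k (Fin.cons l t))) : Fin 4 → Fin n)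
      = ![i, j, k, l] := by
    intro i j k l t
    ext a; fin_cases a <;> rfl
  simp only [this, tup_four]
  have hn : 2 * n = ∑ i : Fin n, ∑ j : Fin n, ∑ k : Fin n, ∑ l : Fin n,
      ∑ _t : Fin 0 → Fin n, if i = j then if i = k then if i = l then 2 else 0 else 0 else 0 := by
    simp [mul_comm]
  have hs : 3 * n ^ 2 = ∑ i : Fin n, ∑ j : Fin n, ∑ k : Fin n, ∑ l : Fin n,
      ∑ _t : Fin 0 → Fin n, ((if i = j then if k = l then 1 else 0 else 0) +
        (if i = k then if j = l then 1 else 0 else 0) +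
        (if i = l then if j = k then 1 else 0 else 0)) := by
    simp [Finset.sum_add_distrib]
    ring
  rw [hn, hs]
  simp only [← Finset.sum_add_distrib]
  refine Finset.sum_congr rfl fun i _ => Finset.sum_congr rfl fun j _ =>
    Finset.sum_congr rfl fun k _ => Finset.sum_congr rfl fun l _ =>
    Finset.sum_congr rfl fun t _ => ?_
  grind

theorem exists_erase {α : Type*} [Fintype α] [Zero α] (hcard : Fintype.card α = 64) :
    ∃ E : Finset α, E.card = 63 ∧
      (∀ f : α → ℤ, ∑ c : α, f c = f 0 + ∑ c ∈ E, f c) ∧ ∀ c ∈ E, c ≠ 0 := by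
  classical
  refine ⟨Finset.univ.erase 0, ?_, ?_, ?_⟩
  · rw [Finset.card_erase_of_mem (Finset.mem_univ _), Finset.card_univ, hcard]
  · exact fun f => (Finset.add_sum_erase _ f (Finset.mem_univ _)).symm
  · exact fun c hc => Finset.ne_of_mem_erase hc

theorem dual_weight_count_36_6_16 {B : Submodule (ZMod 2) (Fin 36 → ZMod 2)}
    (hdim : Module.finrank (ZMod 2) B = 6)
    (hde : IsDoublyEven B)
    (hmin : HasMinWeight (B : Set (Fin 36 → ZMod 2)) 16)
    (hdual : HasMinWeight (dualCode B) 3) :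
    weightCount (dualCode B) 3 = 120 ∧ weightCount (dualCode B) 4 = 945 := by
  classical
  have hcard : Fintype.card B = 64 := by
    rw [Module.card_eq_pow_finrank (K := ZMod 2), hdim, ZMod.card]
    norm_num
  have hD0 : (0 : Fin 36 → ZMod 2) ∈ dualCode B := fun y _ => by simp
  have hD3 : ∀ x ∈ dualCode B, x ≠ 0 → 3 ≤ hammingNorm x :=
    fun x hx h0 => hdual.2 ⟨x, hx, h0, rfl⟩
  have hw0 : ∀ m, m < 3 → 0 < m → weightCount (dualCode B) m = 0 := by
    intro m hm hm0
    unfold weightCount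
    rw [Set.ncard_eq_zero]
    ext x
    simp only [Set.mem_ofPred_eq, Set.mem_empty_iff_false, iff_false, not_and]
    intro hx h
    have := hD3 x hx (by rintro rfl; simp at h; omega)
    omega
  have cnt : ∀ m, 0 < m → m ≤ 4 → ∑ c : B, charSum c.1 ^ m
      = 64 * ((zeroCount 36 m + m.factorial * weightCount (dualCode B) m : ℕ) : ℤ) := by
    intro m hm hm4
    rw [moment, tuple_count_big hm _ hD0, hcard]
    · rfl
    · intro x hx hne hle hpar
      have := hD3 x hx hne
      omega
  have m1 := cnt 1 (by norm_num) (by norm_num)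
  have m2 := cnt 2 (by norm_num) (by norm_num)
  have m3 := cnt 3 (by norm_num) (by norm_num)
  have m4 := cnt 4 (by norm_num) (by norm_num)
  have z4 := zeroCount_four 36
  rw [hw0 1 (by norm_num) (by norm_num), zeroCount_odd 36 1 rfl] at m1
  rw [hw0 2 (by norm_num) (by norm_num), zeroCount_two] at m2
  rw [zeroCount_odd 36 3 rfl] at m3
  obtain ⟨E, hc63, split, hE⟩ : ∃ E : Finset B, E.card = 63 ∧
      (∀ f : B → ℤ, ∑ c : B, f c = f 0 + ∑ c ∈ E, f c) ∧ ∀ c ∈ E, c ≠ 0 := by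
    exact exists_erase hcard
  have s0 : charSum (0 : Fin 36 → ZMod 2) = 36 := by rw [charSum_eq]; simp
  rw [split] at m1 m2 m3 m4
  simp only [ZeroMemClass.coe_zero, s0] at m1 m2 m3 m4
  have hnn : ∀ c ∈ E, 0 ≤ charSum c.1 ^ 2 - 16 := by
    intro c hc
    have hne : c.1 ≠ 0 := by
      exact fun h => hE c hc (Subtype.ext h)
    have h16 : 16 ≤ hammingNorm c.1 := hmin.2 ⟨c.1, c.2, hne, rfl⟩
    obtain ⟨k, hk⟩ := hde c.1 c.2
    rw [charSum_eq, hk]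
    push_cast
    have : k = 4 ∨ 5 ≤ k := by omega
    rcases this with rfl | h
    · norm_num
    · have : (5 : ℤ) ≤ k := by exact_mod_cast h
      nlinarith
  have hsum : ∑ c ∈ E, (charSum c.1 ^ 2 - 16) = 0 := by
    rw [Finset.sum_sub_distrib, Finset.sum_const, hc63]
    simp at m2 ⊢
    linarith
  have hall := (Finset.sum_eq_zero_iff_of_nonneg hnn).1 hsum
  have h3 : ∑ c ∈ E, charSum c.1 ^ 3
      = 16 * ∑ c ∈ E, charSum c.1 ^ 1 := by
    rw [Finset.mul_sum]
    refine Finset.sum_congr rfl fun c hc => ?_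
    have := hall c hc
    linear_combination charSum c.1 * this
  have h4 : ∑ c ∈ E, charSum c.1 ^ 4 = 63 * 256 := by
    rw [Finset.sum_congr rfl (g := fun _ => (256 : ℤ)), Finset.sum_const, hc63]
    · norm_num
    · intro c hc
      have := hall c hc
      linear_combination (charSum c.1 ^ 2 + 16) * this
  rw [h3] at m3
  rw [h4] at m4
  norm_num [Nat.factorial] at m1 m3 m4
  omega
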